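/- Let ε₀ > 0, κ_u, κ_v, κ_w > 0 and σ_u, σ_v, σ_w ≥ 0 be real numbers, and define the PML update coefficients a = κ_v κ_w / κ_u, b = (σ_v κ_w + σ_w κ_v − a σ_u)/(κ_u ε₀), c = σ_v σ_w / ε₀² − b σ_u / ε₀, and d = σ_u/(κ_u ε₀). Let s ∈ ℂ with s ≠ 0 and s ≠ −d, and define the stretching variables s_u = κ_u + σ_u/(s ε₀), s_v = κ_v + σ_v/(s ε₀), s_w = κ_w + σ_w/(s ε₀). Suppose ĥ, p̂, f̂ ∈ ℂ are such that the functions h(t) = ĥ e^{st} and p(t) = p̂ e^{st} satisfy, for all t ∈ ℝ, the time-domain update equations a h′(t) = f̂ e^{st} − b h(t) − c p(t) and p′(t) = κ_u⁻¹ h(t) − d p(t). Then f̂ = s · (s_v s_w / s_u) · ĥ. -/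

import Mathlib

open Complex

/-- The derivative at the origin of a time-harmonic field `A e^{st}` is `s A`. -/
lemma deriv_time_harmonic_zero (A s : ℂ) (g : ℝ → ℂ)
    (hg : ∀ t : ℝ, g t = A * Complex.exp (s * t)) : deriv g 0 = s * A := by
  have hexp : HasDerivAt (fun t : ℝ => A * Complex.exp (s * t))
      (A * (Complex.exp (s * (0 : ℝ)) * (s * 1))) 0 :=
    (((hasDerivAt_id (0 : ℝ)).ofReal_comp.const_mul s).cexp).const_mul A
  rw [funext hg, hexp.deriv]
  simp [mul_comm]

/-- For time-harmonic fields, the auxiliary-variable time-domain PML update pair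
is equivalent to multiplication by the frequency-domain stretched-coordinate
factor `s · s_v s_w / s_u`. -/
theorem pml_time_harmonic_equivalence
    (ε₀ κu κv κw σu σv σw : ℝ)
    (hε₀ : 0 < ε₀) (hκu : 0 < κu) (hκv : 0 < κv) (hκw : 0 < κw)
    (hσu : 0 ≤ σu) (hσv : 0 ≤ σv) (hσw : 0 ≤ σw)
    (a b c d : ℝ)
    (ha : a = κv * κw / κu)
    (hb : b = (σv * κw + σw * κv - a * σu) / (κu * ε₀))
    (hc : c = σv * σw / ε₀ ^ 2 - b * σu / ε₀)
    (hd : d = σu / (κu * ε₀))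
    (s : ℂ) (hs : s ≠ 0) (hsd : s ≠ -(d : ℂ))
    (su sv sw : ℂ)
    (hsu : su = (κu : ℂ) + (σu : ℂ) / (s * (ε₀ : ℂ)))
    (hsv : sv = (κv : ℂ) + (σv : ℂ) / (s * (ε₀ : ℂ)))
    (hsw : sw = (κw : ℂ) + (σw : ℂ) / (s * (ε₀ : ℂ)))
    (hHat pHat fHat : ℂ)
    (h p : ℝ → ℂ)
    (hh : ∀ t : ℝ, h t = hHat * Complex.exp (s * t))
    (hpdef : ∀ t : ℝ, p t = pHat * Complex.exp (s * t))
    (hupH : ∀ t : ℝ,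
      (a : ℂ) * deriv h t = fHat * Complex.exp (s * t) - (b : ℂ) * h t - (c : ℂ) * p t)
    (hupP : ∀ t : ℝ, deriv p t = (κu : ℂ)⁻¹ * h t - (d : ℂ) * p t) :
    fHat = s * (sv * sw / su) * hHat := by
  have hε : (ε₀ : ℂ) ≠ 0 := by exact_mod_cast hε₀.ne'
  have hκ : (κu : ℂ) ≠ 0 := by exact_mod_cast hκu.ne'
  have eqH := hupH 0
  have eqP := hupP 0
  rw [deriv_time_harmonic_zero hHat s h hh, hh, hpdef] at eqH
  rw [deriv_time_harmonic_zero pHat s p hpdef, hh, hpdef] at eqP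
  simp only [ofReal_zero, mul_zero, Complex.exp_zero, mul_one] at eqH eqP
  have hsd' : s + (d : ℂ) ≠ 0 := fun e => hsd (eq_neg_of_add_eq_zero_left e)
  have s_mul_su : s * su = κu * (s + d) := by
    rw [hsu, hd]
    push_cast
    field_simp
  have hsu0 : su ≠ 0 := right_ne_zero_of_mul (s_mul_su ▸ mul_ne_zero hκ hsd')
  have hHat_eq : hHat = s * su * pHat := by
    rw [s_mul_su]
    field_simp at eqP
    linear_combination -eqP
  have factor : (a * s + b) * (s * su) + c = s ^ 2 * (sv * sw) := by
    rw [hsu, hsv, hsw, hc, hb, ha]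
    push_cast
    field_simp
    ring
  have fHat_eq : fHat = s ^ 2 * (sv * sw) * pHat := by
    linear_combination -eqH + (a * s + b) * hHat_eq + pHat * factor
  rw [fHat_eq, hHat_eq]
  field_simp
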